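/- Let γ ∈ R^+ \ Δ and u ∈ W satisfy ℓ(us_γ) = ℓ(u) + 1 − ⟨2ρ, γ^∨⟩. Then ℓ(s_γ) = ⟨2ρ, γ^∨⟩ − 1. Moreover, for any 1 ≤ j ≤ n with ⟨α_j, γ^∨⟩ > 0, setting β := s_j(γ), all of the following hold: ℓ(us_j) = ℓ(u) − 1, ℓ(us_js_β) = ℓ(us_j) − ℓ(s_β), and ℓ(us_γ) = ℓ(us_js_βs_j) = ℓ(us_js_β) − 1. -/

import Mathlib

/-!
Let `Inv w` be the set of positive roots that `w` makes negative. Two inequalities carry the proof.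

* `ℓ(w) ≤ |Inv w|`: by the exchange property, a nontrivial `w` sends some simple root `α_j` to a
  negative root, and then `s_j` maps `Inv (w s_j)` bijectively onto `Inv w \ {α_j}`.
* `|Inv s_γ| + 1 ≤ ⟨2ρ, γ^∨⟩` for a positive root `γ`: in `⟨2ρ, γ^∨⟩ = ∑_{β > 0} ⟨β, γ^∨⟩` the
  roots outside `Inv s_γ` cancel in pairs under `s_γ`, each root of `Inv s_γ` contributes at
  least `1`, and `γ` itself contributes `2`.

Hence `ℓ(s_γ) ≤ ⟨2ρ, γ^∨⟩ - 1`, while the hypothesis and subadditivity of the length give `≥`.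
If `⟨α_j, γ^∨⟩ > 0` and `β = s_j γ`, then `β > 0` and
`⟨2ρ, β^∨⟩ = ⟨2ρ, γ^∨⟩ - 2 ⟨α_j, γ^∨⟩ ≤ ⟨2ρ, γ^∨⟩ - 2`, so `ℓ(s_β) ≤ ℓ(s_γ) - 2`. Passing from `u`
to `u s_γ = u s_j s_β s_j` therefore lowers the length by at most `1 + ℓ(s_β) + 1 ≤ ℓ(s_γ)`;
since the total drop is exactly `ℓ(s_γ)`, every step lowers it as much as possible.
-/

open scoped BigOperators

/-- A reduced crystallographic root system with a fixed base `α_1, …, α_n` of simple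
roots, bundled with its Weyl group `W`.  A root `γ` is recorded by its integer
coordinate vector in the basis of simple roots (so the `i`-th simple root is
`Pi.single i 1`), and `cor γ` is the coordinate vector of the coroot `γ^∨` in the
basis of simple coroots (hence `cor γ i = ⟨χ_i, γ^∨⟩` for the fundamental weights
`χ_i`).  `A i j = ⟨α_i, α_j^∨⟩` is the Cartan matrix, `σ γ` is the reflection `s_γ`
and `act` is the action of the Weyl group on the root lattice. -/
structure RootSystemData (n : ℕ) where
  A : Fin n → Fin n → ℤ
  R : Finset (Fin n → ℤ)
  cor : (Fin n → ℤ) → (Fin n → ℤ)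
  W : Type
  [grp : Group W]
  σ : (Fin n → ℤ) → W
  act : W → (Fin n → ℤ) → (Fin n → ℤ)
  simple_mem : ∀ i : Fin n, (Pi.single i 1 : Fin n → ℤ) ∈ R
  root_ne_zero : ∀ γ ∈ R, γ ≠ 0
  neg_mem : ∀ γ ∈ R, -γ ∈ R
  pos_or_neg : ∀ γ ∈ R, (∀ i, 0 ≤ γ i) ∨ (∀ i, γ i ≤ 0)
  reduced : ∀ γ ∈ R, ∀ k : ℤ, k • γ ∈ R → k = 1 ∨ k = -1
  cor_simple : ∀ i : Fin n, cor (Pi.single i 1) = Pi.single i 1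
  cor_neg : ∀ γ ∈ R, cor (-γ) = -(cor γ)
  pair_self : ∀ γ ∈ R, (∑ i, ∑ j, γ i * A i j * cor γ j) = 2
  act_one : ∀ x, act 1 x = x
  act_mul : ∀ w w' x, act (w * w') x = act w (act w' x)
  act_refl : ∀ γ ∈ R, ∀ x, act (σ γ) x = x - (∑ i, ∑ j, x i * A i j * cor γ j) • γ
  act_mem : ∀ (w : W), ∀ γ ∈ R, act w γ ∈ R
  cor_refl : ∀ γ ∈ R, ∀ β ∈ R,
    cor (act (σ γ) β) = cor β - (∑ i, ∑ j, γ i * A i j * cor β j) • cor γ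
  refl_sq : ∀ γ ∈ R, σ γ * σ γ = 1
  refl_act : ∀ (w : W), ∀ γ ∈ R, σ (act w γ) = w * σ γ * w⁻¹
  act_faithful : ∀ w w' : W, (∀ γ ∈ R, act w γ = act w' γ) → w = w'
  generated : ∀ w : W, ∃ l : List (Fin n), w = (l.map fun i => σ (Pi.single i 1)).prod

namespace RootSystemData

instance {n : ℕ} (c : RootSystemData n) : Group c.W := c.grp

/-- the pairing `⟨x, λ⟩` between an element `x` of the root lattice (coordinates in
the basis of simple roots) and an element `λ` of the coroot lattice (coordinates in
the basis of simple coroots) -/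
def pair {n : ℕ} (c : RootSystemData n) (x lam : Fin n → ℤ) : ℤ :=
  ∑ i, ∑ j, x i * c.A i j * lam j

/-- the `i`-th simple root -/
def sroot {n : ℕ} (_c : RootSystemData n) (i : Fin n) : Fin n → ℤ := Pi.single i 1

/-- the simple reflection `s_i` -/
def s {n : ℕ} (c : RootSystemData n) (i : Fin n) : c.W := c.σ (c.sroot i)

/-- `s_{α_{t+1}}` for a `0`-based natural number index `t` (`= 1` when out of range) -/
def sN {n : ℕ} (c : RootSystemData n) (t : ℕ) : c.W := if h : t < n then c.s ⟨t, h⟩ else 1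

/-- `⟨2ρ, λ⟩ = Σ_{β ∈ R^+} ⟨β, λ⟩`, where `ρ` is the half-sum of the positive roots -/
def pairTwoRho {n : ℕ} (c : RootSystemData n) (lam : Fin n → ℤ) : ℤ :=
  ∑ β ∈ c.R, if ∀ i, 0 ≤ β i then c.pair β lam else 0

/-- the length of `w ∈ W` with respect to the simple reflections -/
noncomputable def len {n : ℕ} (c : RootSystemData n) (w : c.W) : ℕ :=
  sInf {k | ∃ l : List (Fin n), l.length = k ∧ (l.map c.s).prod = w}

/-- the parabolic subgroup `W_S` generated by the simple reflections indexed by `S` -/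
def Wsub {n : ℕ} (c : RootSystemData n) (S : Finset (Fin n)) : Subgroup c.W :=
  Subgroup.closure (c.s '' ↑S)

/-- `w ∈ W_T^S`: `w ∈ W_T` and `w` has minimal length in the coset `w W_S` -/
def MinRep {n : ℕ} (c : RootSystemData n) (T S : Finset (Fin n)) (w : c.W) : Prop :=
  w ∈ c.Wsub T ∧ ∀ u ∈ c.Wsub S, c.len w ≤ c.len (w * u)

/-- `w` is the longest element of `W_S` -/
def IsLongest {n : ℕ} (c : RootSystemData n) (S : Finset (Fin n)) (w : c.W) : Prop :=
  w ∈ c.Wsub S ∧ ∀ v ∈ c.Wsub S, c.len v ≤ c.len w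

end RootSystemData

/-- the support of `γ` is contained in `S`, i.e. `γ` lies in the span of
`{α_i : i ∈ S}` (for a root `γ`, membership in `R_S`) -/
def suppIn {n : ℕ} (S : Finset (Fin n)) (γ : Fin n → ℤ) : Prop :=
  ∀ i, i ∉ S → γ i = 0

/-- `Δ_j` for `0 ≤ j ≤ r+1`: the index set of the first `j` simple roots for `j ≤ r`,
and all of `Δ` for `j = r+1`.  (Indices of simple roots are `0`-based, so
`α_1, …, α_j` correspond to the indices `0, …, j-1`.) -/
def deltaSet (n r j : ℕ) : Finset (Fin n) :=
  if j = r + 1 then Finset.univ else Finset.univ.filter fun i => (i : ℕ) < j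

namespace RootSystemData

/-- `v 0, …, v r` (standing for `v_1, …, v_{r+1}`) is the decomposition of `w`
associated to `(Δ_P, Υ)`:  each `v_i ∈ W_{Δ_i}^{Δ_{i-1}}` and `w = v_{r+1} v_r ⋯ v_1`. -/
def IsDecomp {n : ℕ} (c : RootSystemData n) (r : ℕ) (w : c.W)
    (v : Fin (r + 1) → c.W) : Prop :=
  (∀ k : Fin (r + 1), c.MinRep (deltaSet n r ((k : ℕ) + 1)) (deltaSet n r (k : ℕ)) (v k)) ∧
    w = (List.ofFn v).reverse.prod

/-- the first `m` simple roots `α_1, …, α_m` form a path of type `A_m`: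
`⟨α_i, α_j^∨⟩ = -1` if `|i-j| = 1` and `⟨α_i, α_j^∨⟩ = 0` if `|i-j| ≥ 2`. -/
def PathA {n : ℕ} (c : RootSystemData n) (m : ℕ) : Prop :=
  ∀ i j : Fin n, (i : ℕ) < m → (j : ℕ) < m →
    (((i : ℕ) + 1 = (j : ℕ) ∨ (j : ℕ) + 1 = (i : ℕ)) → c.A i j = -1) ∧
    ((i : ℕ) + 2 ≤ (j : ℕ) ∨ (j : ℕ) + 2 ≤ (i : ℕ) → c.A i j = 0)

/-- `u_{[k,m]} = s_k s_{k+1} ⋯ s_m` (`1`-based indices; `u_{[k,m]} = 1` for `k > m`) -/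
def uu {n : ℕ} (c : RootSystemData n) (k m : ℕ) : c.W :=
  ((List.range' k (m + 1 - k)).map fun t => c.sN (t - 1)).prod

/-- `u_i^{(m)} = s_{m-i+1} s_{m-i+2} ⋯ s_m` -/
def uElt {n : ℕ} (c : RootSystemData n) (i m : ℕ) : c.W := c.uu (m - i + 1) m

end RootSystemData

/-- strict lexicographic order on `Fin m → ℤ` -/
def lexLT {m : ℕ} (x y : Fin m → ℤ) : Prop :=
  ∃ j, x j < y j ∧ ∀ k, k < j → x k = y k

/-- lexicographic order on `Fin m → ℤ` -/
def lexLE {m : ℕ} (x y : Fin m → ℤ) : Prop := x = y ∨ lexLT x y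

/-- the grading `gr(q_{α_{j+1}^∨}) ∈ ℤ^{r+1}` (for the `0`-based index `j < r`), when
`Δ_P` is of type `A_r`: in `1`-based terms, `gr(q_{α_1^∨}) = 2·e_1` and
`gr(q_{α_j^∨}) = (1-j)·e_{j-1} + (1+j)·e_j` for `2 ≤ j ≤ r`. -/
def grQ (r j : ℕ) : Fin (r + 1) → ℤ := fun k =>
  (if (k : ℕ) = j then (j : ℤ) + 2 else 0) + (if (k : ℕ) + 1 = j then -(j : ℤ) else 0)

/-- the grading `gr(q_λ)` for `λ ∈ Q_P^∨` (coordinates in simple coroots), extended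
additively from the `gr(q_{α_j^∨})`, when `Δ_P` is of type `A_r` -/
def grQlam (n r : ℕ) (lam : Fin n → ℤ) : Fin (r + 1) → ℤ :=
  fun k => ∑ j, lam j * grQ r (j : ℕ) k

namespace RootSystemData

variable {n : ℕ} (c : RootSystemData n)

lemma pair_eq_toBilin' (x lam : Fin n → ℤ) :
    c.pair x lam = Matrix.toBilin' (Matrix.of c.A) x lam :=
  (Matrix.toBilin'_apply _ _ _).symm

lemma pair_sub_smul_left (x y lam : Fin n → ℤ) (k : ℤ) :
    c.pair (x - k • y) lam = c.pair x lam - k * c.pair y lam := by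
  simp only [pair_eq_toBilin', map_sub, map_smul, LinearMap.sub_apply, LinearMap.smul_apply,
    smul_eq_mul]

lemma pair_sub_smul_right (x lam mu : Fin n → ℤ) (k : ℤ) :
    c.pair x (lam - k • mu) = c.pair x lam - k * c.pair x mu := by
  simp only [pair_eq_toBilin', map_sub, map_smul, smul_eq_mul]

lemma pair_cor_self {γ : Fin n → ℤ} (hγ : γ ∈ c.R) : c.pair γ (c.cor γ) = 2 :=
  c.pair_self γ hγ

lemma act_σ {γ : Fin n → ℤ} (hγ : γ ∈ c.R) (x : Fin n → ℤ) :
    c.act (c.σ γ) x = x - c.pair x (c.cor γ) • γ :=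
  c.act_refl γ hγ x

lemma act_σ_self {γ : Fin n → ℤ} (hγ : γ ∈ c.R) : c.act (c.σ γ) γ = -γ := by
  rw [c.act_σ hγ, c.pair_cor_self hγ, two_smul, sub_add_cancel_left]

lemma act_σ_involutive {γ : Fin n → ℤ} (hγ : γ ∈ c.R) :
    Function.Involutive (c.act (c.σ γ)) := fun x => by
  rw [← c.act_mul, c.refl_sq γ hγ, c.act_one]

lemma pair_act_σ_cor {γ : Fin n → ℤ} (hγ : γ ∈ c.R) (x : Fin n → ℤ) :
    c.pair (c.act (c.σ γ) x) (c.cor γ) = -c.pair x (c.cor γ) := by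
  rw [c.act_σ hγ, c.pair_sub_smul_left, c.pair_cor_self hγ]
  ring

/-- Linearity of `act w` is assumed only for reflections; for `-γ = s_γ γ` it follows from
`w s_γ w⁻¹ = s_{wγ}`. -/
lemma act_neg (w : c.W) {γ : Fin n → ℤ} (hγ : γ ∈ c.R) : c.act w (-γ) = -c.act w γ := by
  rw [← c.act_σ_self (c.act_mem w γ hγ), c.refl_act w γ hγ, ← c.act_mul, inv_mul_cancel_right,
    c.act_mul, c.act_σ_self hγ]

lemma sroot_mem (j : Fin n) : c.sroot j ∈ c.R := c.simple_mem j

lemma s_mul_s (j : Fin n) : c.s j * c.s j = 1 := c.refl_sq _ (c.sroot_mem j)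

lemma s_inv (j : Fin n) : (c.s j)⁻¹ = c.s j := inv_eq_of_mul_eq_one_left (c.s_mul_s j)

lemma act_s_sroot (j : Fin n) : c.act (c.s j) (c.sroot j) = -c.sroot j :=
  c.act_σ_self (c.sroot_mem j)

lemma act_s_involutive (j : Fin n) : Function.Involutive (c.act (c.s j)) :=
  c.act_σ_involutive (c.sroot_mem j)

lemma act_s_apply_of_ne {i j : Fin n} (hij : i ≠ j) (x : Fin n → ℤ) :
    c.act (c.s j) x i = x i := by
  rw [s, c.act_σ (c.sroot_mem j)]
  simp [sroot, hij]

lemma s_mul_σ_act_s_mul_s (j : Fin n) {γ : Fin n → ℤ} (hγ : γ ∈ c.R) :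
    c.s j * c.σ (c.act (c.s j) γ) * c.s j = c.σ γ := by
  rw [c.refl_act _ _ hγ, c.s_inv]
  simp only [mul_assoc, c.s_mul_s, mul_one]
  rw [← mul_assoc, c.s_mul_s, one_mul]

/-- The set `R^+` of positive roots. -/
def posRoots : Finset (Fin n → ℤ) := {β ∈ c.R | ∀ i, 0 ≤ β i}

lemma mem_posRoots {β : Fin n → ℤ} : β ∈ c.posRoots ↔ β ∈ c.R ∧ ∀ i, 0 ≤ β i :=
  Finset.mem_filter

lemma mem_R_of_mem_posRoots {β : Fin n → ℤ} (hβ : β ∈ c.posRoots) : β ∈ c.R :=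
  (c.mem_posRoots.mp hβ).1

lemma mem_posRoots_of_apply_pos {β : Fin n → ℤ} (hβ : β ∈ c.R) {i : Fin n} (hi : 0 < β i) :
    β ∈ c.posRoots :=
  c.mem_posRoots.mpr ⟨hβ, (c.pos_or_neg β hβ).resolve_right fun hneg => (hneg i).not_gt hi⟩

lemma neg_mem_posRoots_iff {β : Fin n → ℤ} (hβ : β ∈ c.R) :
    -β ∈ c.posRoots ↔ β ∉ c.posRoots := by
  simp only [c.mem_posRoots, hβ, c.neg_mem β hβ, true_and, Pi.neg_apply, Left.nonneg_neg_iff]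
  exact ⟨fun hneg hpos => c.root_ne_zero β hβ (funext fun i => (hneg i).antisymm (hpos i)),
    (c.pos_or_neg β hβ).resolve_left⟩

lemma sroot_mem_posRoots (j : Fin n) : c.sroot j ∈ c.posRoots :=
  c.mem_posRoots_of_apply_pos (c.sroot_mem j) (i := j) (by simp [sroot])

lemma eq_sroot_of_forall_ne_apply_eq_zero {β : Fin n → ℤ} (hβ : β ∈ c.posRoots) {j : Fin n}
    (hzero : ∀ i ≠ j, β i = 0) : β = c.sroot j := by
  obtain ⟨hβR, hβpos⟩ := c.mem_posRoots.mp hβ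
  have hmul : β = β j • c.sroot j := by
    ext i
    obtain rfl | hij := eq_or_ne i j
    · simp [sroot]
    · simp [sroot, hij, hzero i hij]
  rcases c.reduced _ (c.sroot_mem j) (β j) (hmul ▸ hβR) with h | h
  · rwa [h, one_smul] at hmul
  · have := hβpos j
    omega

lemma act_s_mem_posRoots {j : Fin n} {β : Fin n → ℤ} (hβ : β ∈ c.posRoots)
    (hne : β ≠ c.sroot j) : c.act (c.s j) β ∈ c.posRoots := by
  obtain ⟨hβR, hβpos⟩ := c.mem_posRoots.mp hβ
  obtain ⟨i, hij, hi⟩ : ∃ i ≠ j, β i ≠ 0 := by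
    contrapose! hne
    exact c.eq_sroot_of_forall_ne_apply_eq_zero hβ hne
  refine c.mem_posRoots_of_apply_pos (c.act_mem _ _ hβR) (i := i) ?_
  rw [c.act_s_apply_of_ne hij]
  exact (hβpos i).lt_of_ne' hi

lemma act_s_ne_sroot {j : Fin n} {β : Fin n → ℤ} (hβ : β ∈ c.posRoots) :
    c.act (c.s j) β ≠ c.sroot j := by
  intro h
  have hβneg : β = -c.sroot j := by rw [← c.act_s_sroot, ← h, c.act_s_involutive]
  rw [hβneg, c.neg_mem_posRoots_iff (c.sroot_mem j)] at hβ
  exact hβ (c.sroot_mem_posRoots j)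

/-- The inversion set of `w`: the positive roots that `w` sends to negative roots. -/
def inversions (w : c.W) : Finset (Fin n → ℤ) := {β ∈ c.posRoots | c.act w β ∉ c.posRoots}

lemma mem_inversions {w : c.W} {β : Fin n → ℤ} :
    β ∈ c.inversions w ↔ β ∈ c.posRoots ∧ c.act w β ∉ c.posRoots :=
  Finset.mem_filter

lemma inversions_subset_posRoots (w : c.W) : c.inversions w ⊆ c.posRoots :=
  Finset.filter_subset _ _

lemma sroot_mem_inversions {w : c.W} {j : Fin n} :
    c.sroot j ∈ c.inversions w ↔ c.act w (c.sroot j) ∉ c.posRoots := by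
  simp only [c.mem_inversions, c.sroot_mem_posRoots, true_and]

lemma sroot_mem_inversions_mul_s {w : c.W} {j : Fin n} :
    c.sroot j ∈ c.inversions (w * c.s j) ↔ c.sroot j ∉ c.inversions w := by
  rw [c.sroot_mem_inversions, c.sroot_mem_inversions, c.act_mul, c.act_s_sroot,
    c.act_neg _ (c.sroot_mem j), c.neg_mem_posRoots_iff (c.act_mem _ _ (c.sroot_mem j))]

lemma self_mem_inversions_σ {γ : Fin n → ℤ} (hγ : γ ∈ c.posRoots) :
    γ ∈ c.inversions (c.σ γ) := by
  have hγR := c.mem_R_of_mem_posRoots hγ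
  rw [c.mem_inversions, c.act_σ_self hγR, c.neg_mem_posRoots_iff hγR]
  exact ⟨hγ, not_not.mpr hγ⟩

lemma inversions_s (j : Fin n) : c.inversions (c.s j) = {c.sroot j} := by
  refine Finset.eq_singleton_iff_unique_mem.mpr
    ⟨c.self_mem_inversions_σ (c.sroot_mem_posRoots j), fun β hβ => ?_⟩
  obtain ⟨hβpos, hβneg⟩ := c.mem_inversions.mp hβ
  exact not_imp_comm.mp (c.act_s_mem_posRoots hβpos) hβneg

lemma card_inversions_mul_s_add_one {w : c.W} {j : Fin n} (hj : c.sroot j ∈ c.inversions w) :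
    (c.inversions (w * c.s j)).card + 1 = (c.inversions w).card := by
  rw [← Finset.card_erase_add_one hj, Nat.add_right_cancel_iff]
  refine Finset.card_nbij' (c.act (c.s j)) (c.act (c.s j)) (fun β hβ => ?_) (fun β hβ => ?_)
    (fun β _ => c.act_s_involutive j β) (fun β _ => c.act_s_involutive j β)
  · have hne : β ≠ c.sroot j := fun h => c.sroot_mem_inversions_mul_s.mp (h ▸ hβ) hj
    obtain ⟨hpos, hneg⟩ := c.mem_inversions.mp hβ
    rw [c.act_mul] at hneg
    exact Finset.mem_erase.mpr
      ⟨c.act_s_ne_sroot hpos, c.mem_inversions.mpr ⟨c.act_s_mem_posRoots hpos hne, hneg⟩⟩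
  · obtain ⟨hne, hβ⟩ := Finset.mem_erase.mp hβ
    obtain ⟨hpos, hneg⟩ := c.mem_inversions.mp hβ
    refine c.mem_inversions.mpr ⟨c.act_s_mem_posRoots hpos hne, ?_⟩
    rwa [c.act_mul, c.act_s_involutive j β]

lemma exists_word (w : c.W) :
    ∃ l : List (Fin n), l.length = c.len w ∧ (l.map c.s).prod = w := by
  obtain ⟨l, hl⟩ := c.generated w
  exact Nat.sInf_mem (s := {k | ∃ l : List (Fin n), l.length = k ∧ (l.map c.s).prod = w})
    ⟨l.length, l, rfl, hl.symm⟩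

lemma len_prod_le (l : List (Fin n)) : c.len (l.map c.s).prod ≤ l.length :=
  Nat.sInf_le ⟨l, rfl, rfl⟩

lemma len_one : c.len 1 = 0 :=
  Nat.le_zero.mp (by simpa using c.len_prod_le [])

lemma len_s_le_one (j : Fin n) : c.len (c.s j) ≤ 1 := by
  simpa using c.len_prod_le [j]

lemma len_mul_le (v w : c.W) : c.len (v * w) ≤ c.len v + c.len w := by
  obtain ⟨l, hl, rfl⟩ := c.exists_word v
  obtain ⟨m, hm, rfl⟩ := c.exists_word w
  simpa [hl, hm] using c.len_prod_le (l ++ m)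

lemma len_le_len_mul_σ_add (v : c.W) {γ : Fin n → ℤ} (hγ : γ ∈ c.R) :
    c.len v ≤ c.len (v * c.σ γ) + c.len (c.σ γ) := by
  simpa only [mul_assoc, c.refl_sq γ hγ, mul_one] using c.len_mul_le (v * c.σ γ) (c.σ γ)

lemma len_le_len_mul_s_add_one (v : c.W) (j : Fin n) :
    c.len v ≤ c.len (v * c.s j) + 1 :=
  (c.len_le_len_mul_σ_add v (c.sroot_mem j)).trans (Nat.add_le_add_left (c.len_s_le_one j) _)

/-- The exchange property. The letter to erase is the `s_i` at which the image of `α_j` under the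
tails of the word turns negative: the tail `t` after it maps `α_j` to `α_i`, so
`s_i = t s_j t⁻¹`. -/
lemma exists_prod_eraseIdx_eq_prod_mul_s {j : Fin n} {l : List (Fin n)}
    (hj : c.sroot j ∈ c.inversions (l.map c.s).prod) :
    ∃ k < l.length, ((l.eraseIdx k).map c.s).prod = (l.map c.s).prod * c.s j := by
  induction l with
  | nil => simp [c.sroot_mem_inversions, c.act_one, c.sroot_mem_posRoots] at hj
  | cons i t ih =>
    by_cases ht : c.sroot j ∈ c.inversions (t.map c.s).prod
    · obtain ⟨k, hk, hprod⟩ := ih ht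
      exact ⟨k + 1, by simpa using hk, by simp [hprod, mul_assoc]⟩
    · rw [c.sroot_mem_inversions, not_not] at ht
      rw [c.sroot_mem_inversions, List.map_cons, List.prod_cons, c.act_mul] at hj
      have hroot : c.act (t.map c.s).prod (c.sroot j) = c.sroot i :=
        not_imp_comm.mp (c.act_s_mem_posRoots ht) hj
      have hconj : c.s i = (t.map c.s).prod * c.s j * (t.map c.s).prod⁻¹ := by
        rw [s, ← hroot, c.refl_act _ _ (c.sroot_mem j), s]
      exact ⟨0, by simp, by simp [hconj, mul_assoc, c.s_mul_s]⟩

lemma len_mul_s_lt {w : c.W} {j : Fin n} (hj : c.sroot j ∈ c.inversions w) :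
    c.len (w * c.s j) < c.len w := by
  obtain ⟨l, hl, rfl⟩ := c.exists_word w
  obtain ⟨k, hk, hprod⟩ := c.exists_prod_eraseIdx_eq_prod_mul_s hj
  calc c.len ((l.map c.s).prod * c.s j)
      ≤ (l.eraseIdx k).length := hprod ▸ c.len_prod_le _
    _ < l.length := by rw [List.length_eraseIdx_of_lt hk]; omega
    _ = c.len (l.map c.s).prod := hl

lemma exists_sroot_mem_inversions {w : c.W} (hw : w ≠ 1) : ∃ j, c.sroot j ∈ c.inversions w := by
  obtain ⟨l, hl, rfl⟩ := c.exists_word w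
  obtain rfl | ⟨t, j, rfl⟩ := List.eq_nil_or_concat' l
  · simp at hw
  refine ⟨j, by_contra fun hj => ?_⟩
  simp only [List.map_append, List.map_singleton, List.prod_append, List.prod_singleton,
    List.length_append, List.length_singleton] at hl hj
  have hlt := c.len_mul_s_lt (not_imp_comm.mp c.sroot_mem_inversions_mul_s.mpr hj)
  have hle := c.len_prod_le t
  omega

lemma len_le_card_inversions (w : c.W) : c.len w ≤ (c.inversions w).card := by
  obtain rfl | hw := eq_or_ne w 1
  · simp [c.len_one]
  obtain ⟨j, hj⟩ := c.exists_sroot_mem_inversions hw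
  have hcard := c.card_inversions_mul_s_add_one hj
  calc c.len w
      ≤ c.len (w * c.s j) + 1 := c.len_le_len_mul_s_add_one w j
    _ ≤ (c.inversions (w * c.s j)).card + 1 := by
        gcongr
        exact len_le_card_inversions _
    _ = (c.inversions w).card := hcard
termination_by (c.inversions w).card

lemma pairTwoRho_eq_sum_posRoots (lam : Fin n → ℤ) :
    c.pairTwoRho lam = ∑ β ∈ c.posRoots, c.pair β lam :=
  (Finset.sum_filter _ _).symm

lemma pairTwoRho_sub_smul (lam mu : Fin n → ℤ) (k : ℤ) :
    c.pairTwoRho (lam - k • mu) = c.pairTwoRho lam - k * c.pairTwoRho mu := by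
  simp only [pairTwoRho_eq_sum_posRoots, pair_sub_smul_right, Finset.sum_sub_distrib,
    Finset.mul_sum]

lemma sum_posRoots_sdiff_inversions_pair_cor {γ : Fin n → ℤ} (hγ : γ ∈ c.R) :
    ∑ β ∈ c.posRoots \ c.inversions (c.σ γ), c.pair β (c.cor γ) = 0 := by
  have hmem : ∀ {β}, β ∈ c.posRoots \ c.inversions (c.σ γ) ↔
      β ∈ c.posRoots ∧ c.act (c.σ γ) β ∈ c.posRoots := by
    intro β
    simp only [Finset.mem_sdiff, c.mem_inversions]
    tauto
  refine Finset.sum_involution (fun β _ => c.act (c.σ γ) β) (fun β _ => ?_)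
    (fun β _ hne hfix => ?_) (fun β hβ => ?_) (fun β _ => c.act_σ_involutive hγ β)
  · rw [c.pair_act_σ_cor hγ, add_neg_cancel]
  · have hflip := c.pair_act_σ_cor hγ β
    rw [hfix] at hflip
    omega
  · rw [hmem, c.act_σ_involutive hγ β]
    exact (hmem.mp hβ).symm

lemma pairTwoRho_cor_eq_sum_inversions {γ : Fin n → ℤ} (hγ : γ ∈ c.R) :
    c.pairTwoRho (c.cor γ) = ∑ β ∈ c.inversions (c.σ γ), c.pair β (c.cor γ) := by
  rw [c.pairTwoRho_eq_sum_posRoots, ← Finset.sum_sdiff (c.inversions_subset_posRoots (c.σ γ)),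
    c.sum_posRoots_sdiff_inversions_pair_cor hγ, zero_add]

lemma pair_cor_pos_of_mem_inversions_σ {β γ : Fin n → ℤ} (hγ : γ ∈ c.posRoots)
    (hβ : β ∈ c.inversions (c.σ γ)) : 0 < c.pair β (c.cor γ) := by
  obtain ⟨hγR, hγpos⟩ := c.mem_posRoots.mp hγ
  obtain ⟨hβpos, hneg⟩ := c.mem_inversions.mp hβ
  obtain ⟨hβR, hβpos⟩ := c.mem_posRoots.mp hβpos
  contrapose! hneg
  refine c.mem_posRoots.mpr ⟨c.act_mem _ _ hβR, fun i => ?_⟩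
  rw [c.act_σ hγR]
  exact sub_nonneg.mpr ((mul_nonpos_of_nonpos_of_nonneg hneg (hγpos i)).trans (hβpos i))

lemma card_inversions_σ_add_one_le {γ : Fin n → ℤ} (hγ : γ ∈ c.posRoots) :
    ((c.inversions (c.σ γ)).card : ℤ) + 1 ≤ c.pairTwoRho (c.cor γ) := by
  have hγR := c.mem_R_of_mem_posRoots hγ
  have hself := c.self_mem_inversions_σ hγ
  have herase := Finset.card_nsmul_le_sum ((c.inversions (c.σ γ)).erase γ)
    (fun β => c.pair β (c.cor γ)) 1
    fun β hβ => c.pair_cor_pos_of_mem_inversions_σ hγ (Finset.mem_of_mem_erase hβ)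
  rw [nsmul_one] at herase
  rw [c.pairTwoRho_cor_eq_sum_inversions hγR, ← Finset.add_sum_erase _ _ hself,
    c.pair_cor_self hγR, ← Finset.card_erase_add_one hself]
  push_cast
  linarith

lemma len_σ_add_one_le {γ : Fin n → ℤ} (hγ : γ ∈ c.posRoots) :
    (c.len (c.σ γ) : ℤ) + 1 ≤ c.pairTwoRho (c.cor γ) := by
  have hcard := c.card_inversions_σ_add_one_le hγ
  have hlen := c.len_le_card_inversions (c.σ γ)
  omega

lemma pairTwoRho_cor_sroot (j : Fin n) : c.pairTwoRho (c.cor (c.sroot j)) = 2 := by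
  rw [c.pairTwoRho_cor_eq_sum_inversions (c.sroot_mem j), ← s, c.inversions_s,
    Finset.sum_singleton, c.pair_cor_self (c.sroot_mem j)]

lemma pairTwoRho_cor_act_s (j : Fin n) {γ : Fin n → ℤ} (hγ : γ ∈ c.R) :
    c.pairTwoRho (c.cor (c.act (c.s j) γ)) =
      c.pairTwoRho (c.cor γ) - 2 * c.pair (c.sroot j) (c.cor γ) := by
  have hcor : c.cor (c.act (c.s j) γ) =
      c.cor γ - c.pair (c.sroot j) (c.cor γ) • c.cor (c.sroot j) :=
    c.cor_refl _ (c.sroot_mem j) γ hγ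
  rw [hcor, c.pairTwoRho_sub_smul, c.pairTwoRho_cor_sroot, mul_comm]

end RootSystemData

/-- Let `γ ∈ R^+ \ Δ` and `u ∈ W` satisfy `ℓ(u s_γ) = ℓ(u) + 1 - ⟨2ρ, γ^∨⟩`.
Then `ℓ(s_γ) = ⟨2ρ, γ^∨⟩ - 1`; and for any simple index `j` with `⟨α_j, γ^∨⟩ > 0`,
setting `β := s_j(γ)`, one has `ℓ(u s_j) = ℓ(u) - 1`,
`ℓ(u s_j s_β) = ℓ(u s_j) - ℓ(s_β)` and
`ℓ(u s_γ) = ℓ(u s_j s_β s_j) = ℓ(u s_j s_β) - 1`. -/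
theorem length_descent_of_maximal_degree {n : ℕ} (c : RootSystemData n)
    (γ : Fin n → ℤ) (hγR : γ ∈ c.R) (hγpos : ∀ i, 0 ≤ γ i)
    (hγns : ∀ i : Fin n, γ ≠ c.sroot i)
    (u : c.W)
    (hlen : (c.len (u * c.σ γ) : ℤ) = (c.len u : ℤ) + 1 - c.pairTwoRho (c.cor γ)) :
    (c.len (c.σ γ) : ℤ) = c.pairTwoRho (c.cor γ) - 1 ∧
    ∀ j : Fin n, 0 < c.pair (c.sroot j) (c.cor γ) →
      c.len (u * c.s j) + 1 = c.len u ∧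
      c.len (u * c.s j * c.σ (c.act (c.s j) γ)) + c.len (c.σ (c.act (c.s j) γ)) =
        c.len (u * c.s j) ∧
      c.len (u * c.σ γ) = c.len (u * c.s j * c.σ (c.act (c.s j) γ) * c.s j) ∧
      c.len (u * c.σ γ) + 1 = c.len (u * c.s j * c.σ (c.act (c.s j) γ)) := by
  have hγ : γ ∈ c.posRoots := c.mem_posRoots.mpr ⟨hγR, hγpos⟩
  have hσγ := c.len_σ_add_one_le hγ
  have hdrop := c.len_le_len_mul_σ_add u hγR
  refine ⟨by omega, fun j hj => ?_⟩
  have hβ : c.act (c.s j) γ ∈ c.posRoots := c.act_s_mem_posRoots hγ (hγns j)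
  have hσβ := c.len_σ_add_one_le hβ
  rw [c.pairTwoRho_cor_act_s j hγR] at hσβ
  have hfactor : u * c.s j * c.σ (c.act (c.s j) γ) * c.s j = u * c.σ γ := by
    rw [← c.s_mul_σ_act_s_mul_s j hγR]
    simp only [mul_assoc]
  have hdrop₁ := c.len_le_len_mul_s_add_one u j
  have hdrop₂ := c.len_le_len_mul_σ_add (u * c.s j) (c.mem_R_of_mem_posRoots hβ)
  have hdrop₃ := c.len_le_len_mul_s_add_one (u * c.s j * c.σ (c.act (c.s j) γ)) j
  rw [hfactor] at hdrop₃ ⊢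
  exact ⟨by omega, by omega, rfl, by omega⟩
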